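/- In the box problem with boxes considered in the fixed order 1, 2, …, m, let X be a half-infinite interval of the form (θ,∞) or [θ,∞), and consider the κ-thresholding policy with target interval X: going through boxes in order, it skips every box with z_i ∉ X, opens every box with z_i ∈ X (paying cost c_i), and stops and claims the prize of the first opened box whose prize v_i lies in X. Then the expected net value of this policy equals E[κ_τ · 1{τ ≤ m}], where τ = min{ i : κ_i ∈ X } is the first index whose covered call value lies in X (and the expectation is 0 on the event that no such index exists). -/

import Mathlib

open MeasureTheory ProbabilityTheory

/-- The value obtained by a threshold stopping rule with eligible set `X ⊆ ℝ` applied to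
the finite sequence `x 0, x 1, …, x (m-1)`: it selects the first entry lying in `X`,
and receives `0` if no entry lies in `X`. -/
noncomputable def thresholdStopValue {m : ℕ} (x : Fin m → ℝ) (X : Set ℝ) : ℝ := by
  classical
  exact match Fin.find? (fun i => x i ∈ X) with
    | some i => x i
    | none => 0

open Classical in
/-- The (realized) net value of the `κ`-thresholding policy with target interval `X` in
the box problem with exogenous order `1,…,m`: going through boxes in order it skips
every box with `z i ∉ X`, opens every box with `z i ∈ X` (paying `c i`), and stops and
claims the prize of the first opened box whose prize `v i` lies in `X`.  Since `X` is
a half-infinite interval, the policy stops exactly at the first `i` with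
`κ i = min (v i) (z i) ∈ X`, having opened all boxes `j ≤ i` with `z j ∈ X`. -/
noncomputable def kappaThreshNet {m : ℕ} (v z c : Fin m → ℝ) (X : Set ℝ) : ℝ :=
  match Fin.find? (fun i => min (v i) (z i) ∈ X) with
  | some i => v i - ∑ j ∈ Finset.univ.filter (fun j : Fin m => z j ∈ X ∧ j ≤ i), c j
  | none => - ∑ j ∈ Finset.univ.filter (fun j : Fin m => z j ∈ X), c j

open Classical in
lemma kappa_pointwise {m : ℕ} (v z c : Fin m → ℝ) (X : Set ℝ)
    (hX : ∀ a b, a ≤ b → a ∈ X → b ∈ X) :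
    kappaThreshNet v z c X = thresholdStopValue (fun i => min (v i) (z i)) X
      + ∑ j, (if ∀ i < j, min (v i) (z i) ∉ X then (1 : ℝ) else 0)
          * (if z j ∈ X then max (v j - z j) 0 - c j else 0) := by
  have key : ∀ j, min (v j) (z j) ∉ X → z j ∈ X → max (v j - z j) 0 = 0 := by
    intro j h1 h2
    rcases le_total (v j) (z j) with h | h
    · exact max_eq_right (by linarith)
    · rw [min_eq_right h] at h1
      exact absurd h2 h1
  unfold kappaThreshNet thresholdStopValue
  rcases h : Fin.find? (fun i => decide (min (v i) (z i) ∈ X)) with _ | i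
  · rw [Fin.find?_eq_none_iff] at h
    simp only [decide_eq_true_eq, decide_eq_false_iff_not] at h
    simp only [zero_add]
    rw [Finset.sum_filter, ← Finset.sum_neg_distrib]
    refine Finset.sum_congr rfl fun j _ => ?_
    rw [if_pos (fun i _ => h i), one_mul]
    split_ifs with hz
    · rw [key j (h j) hz]; ring
    · simp
  · rw [Fin.find?_eq_some_iff] at h
    simp only [decide_eq_true_eq, decide_eq_false_iff_not] at h
    obtain ⟨hi, hlt⟩ := h
    have hzi : z i ∈ X := hX _ _ (min_le_right _ _) hi
    have hs : ∀ j, (if ∀ i < j, min (v i) (z i) ∉ X then (1 : ℝ) else 0)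
          * (if z j ∈ X then max (v j - z j) 0 - c j else 0)
        = (if j = i then max (v i - z i) 0 else 0) - (if z j ∈ X ∧ j ≤ i then c j else 0) := by
      intro j
      rcases lt_trichotomy j i with hj | hj | hj
      · rw [if_pos (fun k hk => hlt k (hk.trans hj)), if_neg hj.ne]
        by_cases hz : z j ∈ X
        · simp [hz, hj.le, key j (hlt j hj) hz]
        · simp [hz]
      · subst hj
        rw [if_pos (fun k hk => hlt k hk)]
        simp [hzi]
      · rw [if_neg (fun hh => hh i hj hi), if_neg hj.ne', if_neg (c := z j ∈ X ∧ j ≤ i) (fun hh => absurd hh.2 (not_le.2 hj))]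
        simp
    simp only [hs, Finset.sum_sub_distrib, Finset.sum_ite_eq', Finset.mem_univ, if_true,
      Finset.sum_filter]
    have : v i = min (v i) (z i) + max (v i - z i) 0 := by
      rcases le_total (v i) (z i) with h | h
      · rw [min_eq_left h, max_eq_right (by linarith)]; ring
      · rw [min_eq_right h, max_eq_left (by linarith)]; ring
    linarith

/-- In the box problem with boxes considered in the fixed order
`1,…,m` (independent nonnegative prizes `v i`, opening costs `c i ≥ 0`, strike prices
`z i` with `E[(v i − z i)^+] = c i`, covered call values `κ i = min (v i) (z i)`), for
any half-infinite target interval `X = (θ,∞)` or `X = [θ,∞)`, the expected net value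
of the `κ`-thresholding policy with target interval `X` equals `E[κ_τ · 1{τ ≤ m}]`,
where `τ = min{i : κ i ∈ X}` (the expectation being `0` on the event that no such
index exists). -/
theorem kappa_thresholding_value {Ω : Type*} [MeasurableSpace Ω]
    (μ : Measure Ω) [IsProbabilityMeasure μ]
    (m : ℕ) (v : Fin m → Ω → ℝ)
    (hmeas : ∀ i, Measurable (v i))
    (hnonneg : ∀ i ω, 0 ≤ v i ω)
    (hint : ∀ i, Integrable (v i) μ)
    (hindep : iIndepFun v μ)
    (z c : Fin m → ℝ) (hc_nonneg : ∀ i, 0 ≤ c i)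
    (hstrike : ∀ i, ∫ ω, max (v i ω - z i) 0 ∂μ = c i)
    (X : Set ℝ) (hX : (∃ θ, X = Set.Ioi θ) ∨ (∃ θ, X = Set.Ici θ)) :
    ∫ ω, kappaThreshNet (fun i => v i ω) z c X ∂μ
      = ∫ ω, thresholdStopValue (fun i => min (v i ω) (z i)) X ∂μ := by
  classical
  have hup : ∀ a b, a ≤ b → a ∈ X → b ∈ X := by
    rintro a b hab ha
    rcases hX with ⟨θ, rfl⟩ | ⟨θ, rfl⟩
    · exact lt_of_lt_of_le ha hab
    · exact le_trans (Set.mem_Ici.1 ha) hab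
  have hXm : MeasurableSet X := by
    rcases hX with ⟨θ, rfl⟩ | ⟨θ, rfl⟩
    · exact measurableSet_Ioi
    · exact measurableSet_Ici
  have hterm : ∀ j, Integrable (fun ω => (if ∀ i < j, min (v i ω) (z i) ∉ X then (1 : ℝ) else 0)
          * (if z j ∈ X then max (v j ω - z j) 0 - c j else 0)) μ ∧
      ∫ ω, (if ∀ i < j, min (v i ω) (z i) ∉ X then (1 : ℝ) else 0)
          * (if z j ∈ X then max (v j ω - z j) 0 - c j else 0) ∂μ = 0 := by
    intro j
    by_cases hz : z j ∈ X
    swap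
    · simp [hz]
    simp only [hz, if_true]
    have hmax : Integrable (fun ω => max (v j ω - z j) 0) μ :=
      ((hint j).sub (integrable_const _)).sup (integrable_const 0)
    have hg : Integrable (fun ω => max (v j ω - z j) 0 - c j) μ :=
      hmax.sub (integrable_const _)
    have hg0 : ∫ ω, (max (v j ω - z j) 0 - c j) ∂μ = 0 := by
      rw [integral_sub hmax (integrable_const _), hstrike j]
      simp
    have hS : MeasurableSet {x : ↥(Finset.Iio j) → ℝ |
        ∀ i, min (x i) (z i) ∉ X} := by
      rw [Set.ofPred_forall]
      refine MeasurableSet.iInter fun i => ?_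
      exact (((measurable_pi_apply i).min measurable_const) hXm).compl
    have hF : Measurable (fun x : ↥(Finset.Iio j) → ℝ =>
        if ∀ i, min (x i) (z i) ∉ X then (1 : ℝ) else 0) :=
      Measurable.ite hS measurable_const measurable_const
    have hG : Measurable (fun x : ↥({j} : Finset (Fin m)) → ℝ =>
        max (x ⟨j, Finset.mem_singleton_self j⟩ - z j) 0 - c j) := by
      fun_prop
    have hind := (hindep.indepFun_finset (Finset.Iio j) {j} (by simp) hmeas).comp hF hG
    have hfe : ((fun x : ↥(Finset.Iio j) → ℝ =>
        if ∀ i, min (x i) (z i) ∉ X then (1 : ℝ) else 0) ∘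
          fun ω (i : ↥(Finset.Iio j)) => v i ω)
        = fun ω => if ∀ i < j, min (v i ω) (z i) ∉ X then (1 : ℝ) else 0 := by
      funext ω
      simp
    have hfm : Measurable (fun ω => if ∀ i < j, min (v i ω) (z i) ∉ X then (1 : ℝ) else 0) := by
      rw [← hfe]
      exact hF.comp (measurable_pi_lambda _ fun i => hmeas i)
    rw [hfe] at hind
    constructor
    · refine hg.bdd_mul (c := 1) hfm.aestronglyMeasurable (Filter.Eventually.of_forall fun ω => ?_)
      split_ifs <;> simp
    · have := hind.integral_fun_mul_eq_mul_integral hfm.aestronglyMeasurable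
        hg.aestronglyMeasurable
      refine this.trans ?_
      refine (congrArg _ hg0).trans (mul_zero _)
  simp only [fun ω => kappa_pointwise (fun i => v i ω) z c X hup]
  have hD := integrable_finsetSum Finset.univ (fun j _ => (hterm j).1)
  by_cases hs : Integrable (fun ω => thresholdStopValue (fun i => min (v i ω) (z i)) X) μ
  · rw [integral_add hs hD, integral_finsetSum _ (fun j _ => (hterm j).1),
      Finset.sum_eq_zero (fun j _ => (hterm j).2), add_zero]
  · rw [integral_undef hs, integral_undef]
    intro h
    apply hs
    refine (h.sub hD).congr (Filter.Eventually.of_forall fun ω => ?_)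
    simp
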